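/- Let k be an algebraically closed field of characteristic 0. The nullcone N_8 of the space V_8 of binary octavics equals the common zero set of J_2, J_3, J_4, J_5, J_6, J_7: a binary octavic f lies in N_8 (i.e. every homogeneous SL_2(k)-invariant of positive degree vanishes at f) if and only if J_2(f) = J_3(f) = J_4(f) = J_5(f) = J_6(f) = J_7(f) = 0. -/

import Mathlib

noncomputable section

open MvPolynomial


/-- the generic binary form of degree d, with coefficients the variables A_0, ..., A_d -/
def genForm (k : Type*) [Field k] (d : ℕ) :
    MvPolynomial (Fin 2) (MvPolynomial (Fin (d + 1)) k) :=
  ∑ i : Fin (d + 1), C (X i) * X 0 ^ (i : ℕ) * X 1 ^ (d - (i : ℕ))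

/-- the generic binary form after the substitution (X,Y) ↦ (aX+bY, cX+dY) -/
def substGen (k : Type*) [Field k] (d : ℕ) (g : Matrix (Fin 2) (Fin 2) k) :
    MvPolynomial (Fin 2) (MvPolynomial (Fin (d + 1)) k) :=
  aeval (fun i : Fin 2 => C (C (g i 0)) * X 0 + C (C (g i 1)) * X 1) (genForm k d)

/-- the i-th coefficient of the transformed generic binary form, as a polynomial
in the coefficients A_0, ..., A_d -/
def actPoly (k : Type*) [Field k] (d : ℕ) (g : Matrix (Fin 2) (Fin 2) k) :
    Fin (d + 1) → MvPolynomial (Fin (d + 1)) k := fun i =>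
  coeff (Finsupp.single (0 : Fin 2) (i : ℕ) + Finsupp.single (1 : Fin 2) (d - (i : ℕ)))
    (substGen k d g)

/-- the action I ↦ I^g on the coordinate ring k[A_0,...,A_d], given by
(I^g)(f) = I(g(f)) -/
def actHom (k : Type*) [Field k] (d : ℕ) (g : Matrix (Fin 2) (Fin 2) k) :
    MvPolynomial (Fin (d + 1)) k →ₐ[k] MvPolynomial (Fin (d + 1)) k :=
  aeval (actPoly k d g)

/-- the ring R_d of SL_2(k)-invariants in k[A_0,...,A_d] -/
def invariantRing (k : Type*) [Field k] (d : ℕ) :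
    Subalgebra k (MvPolynomial (Fin (d + 1)) k) :=
  ⨅ g : Matrix.SpecialLinearGroup (Fin 2) k,
    AlgHom.equalizer (actHom k d (g : Matrix (Fin 2) (Fin 2) k)) (AlgHom.id k _)

/-- the nullcone N_d: the common zero set of all homogeneous invariants of positive degree -/
def nullcone (k : Type*) [Field k] (d : ℕ) : Set (Fin (d + 1) → k) :=
  {a | ∀ I ∈ invariantRing k d, ∀ n : ℕ, 0 < n → I.IsHomogeneous n → eval a I = 0}


variable {k : Type*} [Field k]

/-- char k not in {2,3,5,7} -/
def CharOK (k : Type*) [Field k] : Prop :=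
  ringChar k ≠ 2 ∧ ringChar k ≠ 3 ∧ ringChar k ≠ 5 ∧ ringChar k ≠ 7

/-- the r-th transvectant of binary forms f, g of degrees n and m -/
def transvectant (n m r : ℕ) (f g : MvPolynomial (Fin 2) k) : MvPolynomial (Fin 2) k :=
  C ((((m - r).factorial * (n - r).factorial : ℕ) : k) /
      ((n.factorial * m.factorial : ℕ) : k)) *
    ∑ j ∈ Finset.range (r + 1),
      C ((-1 : k) ^ j * (r.choose j : k)) *
        ((fun p => pderiv (0 : Fin 2) p)^[r - j] ((fun p => pderiv (1 : Fin 2) p)^[j] f)) *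
        ((fun p => pderiv (0 : Fin 2) p)^[j] ((fun p => pderiv (1 : Fin 2) p)^[r - j] g))

/-- the binary octavic with coefficient vector a -/
def octForm (a : Fin 9 → k) : MvPolynomial (Fin 2) k :=
  ∑ i : Fin 9, C (a i) * X 0 ^ (i : ℕ) * X 1 ^ (8 - (i : ℕ))

def covg (a : Fin 9 → k) := transvectant 8 8 4 (octForm a) (octForm a)
def covk (a : Fin 9 → k) := transvectant 8 8 6 (octForm a) (octForm a)
def covh (a : Fin 9 → k) := transvectant 4 4 2 (covk a) (covk a)
def covm (a : Fin 9 → k) := transvectant 8 4 4 (octForm a) (covk a)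
def covn (a : Fin 9 → k) := transvectant 8 4 4 (octForm a) (covh a)
def covp (a : Fin 9 → k) := transvectant 8 4 4 (covg a) (covk a)
def covq (a : Fin 9 → k) := transvectant 8 4 4 (covg a) (covh a)

def J2 (a : Fin 9 → k) : k :=
  (2 ^ 2 * 5 * 7 : k) * constantCoeff (transvectant 8 8 8 (octForm a) (octForm a))
def J3 (a : Fin 9 → k) : k :=
  ((2 ^ 4 * 5 ^ 2 * 7 ^ 3 : k) / 3) * constantCoeff (transvectant 8 8 8 (octForm a) (covg a))
def J4 (a : Fin 9 → k) : k :=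
  (2 ^ 9 * 3 * 7 ^ 4 : k) * constantCoeff (transvectant 4 4 4 (covk a) (covk a))
def J5 (a : Fin 9 → k) : k :=
  (2 ^ 9 * 5 * 7 ^ 5 : k) * constantCoeff (transvectant 4 4 4 (covm a) (covk a))
def J6 (a : Fin 9 → k) : k :=
  (2 ^ 14 * 3 ^ 2 * 7 ^ 6 : k) * constantCoeff (transvectant 4 4 4 (covk a) (covh a))
def J7 (a : Fin 9 → k) : k :=
  (2 ^ 14 * 3 * 5 * 7 ^ 7 : k) * constantCoeff (transvectant 4 4 4 (covm a) (covh a))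
def J8 (a : Fin 9 → k) : k :=
  (2 ^ 17 * 3 * 5 ^ 2 * 7 ^ 9 : k) * constantCoeff (transvectant 4 4 4 (covp a) (covh a))
def J9 (a : Fin 9 → k) : k :=
  (2 ^ 19 * 3 ^ 2 * 5 * 7 ^ 9 : k) * constantCoeff (transvectant 4 4 4 (covn a) (covh a))
def J10 (a : Fin 9 → k) : k :=
  (2 ^ 22 * 3 ^ 2 * 5 ^ 2 * 7 ^ 11 : k) * constantCoeff (transvectant 4 4 4 (covq a) (covh a))

def Jinv : ℕ → (Fin 9 → k) → k
  | 2 => J2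
  | 3 => J3
  | 4 => J4
  | 5 => J5
  | 6 => J6
  | 7 => J7
  | 8 => J8
  | 9 => J9
  | 10 => J10
  | _ => fun _ => 0

/-- action of a 2x2 matrix on binary forms by substitution (X,Y) ↦ (aX+bY, cX+dY) -/
def substForm (g : Matrix (Fin 2) (Fin 2) k) (p : MvPolynomial (Fin 2) k) :
    MvPolynomial (Fin 2) k :=
  aeval (fun i : Fin 2 => C (g i 0) * X 0 + C (g i 1) * X 1) p

/-- coefficients of the transformed octavic -/
def octAct (g : Matrix (Fin 2) (Fin 2) k) (a : Fin 9 → k) : Fin 9 → k := fun i =>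
  coeff (Finsupp.single (0 : Fin 2) (i : ℕ) + Finsupp.single (1 : Fin 2) (8 - (i : ℕ)))
    (substForm g (octForm a))

/-!
An `SL₂`-equivariant polynomial map from octavics to binary forms yields an invariant by taking
constant coefficients, so the `Jᵢ` are invariants because transvectants are equivariant, and they
vanish on the nullcone.

Conversely let all `Jᵢ` vanish at `f`, and move a root of the quartic covariant `κ` to `X = 0`.
Up to nonzero factors `J₄` and `J₆` are the two basic invariants of `κ`, so their vanishing gives
`κ` a triple root; with `J₂`, `J₃`, `J₅` and `J₇` the root is quadruple. If `κ ≠ 0`, then `J₅ = 0`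
says that it is also a root of `f`; if `κ = 0`, any root of `f` may be taken. In either case
`X ∣ f` and `X⁴ ∣ κ`. After a substitution `Y ↦ Y + s X` that kills the coefficient of `f` following
the lowest one, the quadratic equations expressing `X⁴ ∣ κ`, together with `J₂` and `J₃`, force `f`
to have a root of multiplicity at least five. A diagonal one-parameter subgroup then moves `f` to
the zero form in the limit.
-/

section Forms

/-- The binary form `∑ aᵢ Xⁱ Yᵈ⁻ⁱ` of degree `d` with coefficient vector `a`. -/
def binForm (d : ℕ) (a : Fin (d + 1) → k) : MvPolynomial (Fin 2) k :=
  ∑ i : Fin (d + 1), C (a i) * X 0 ^ (i : ℕ) * X 1 ^ (d - (i : ℕ))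

/-- The exponent of the monomial `Xⁱ Yᵈ⁻ⁱ`. -/
def binExponent (d i : ℕ) : Fin 2 →₀ ℕ :=
  Finsupp.single 0 i + Finsupp.single 1 (d - i)

/-- The coefficient vector of a binary form of degree `d`, inverse to `binForm d`. -/
def formCoeffs (d : ℕ) (p : MvPolynomial (Fin 2) k) : Fin (d + 1) → k := fun i =>
  coeff (binExponent d i) p

/-- `substForm g` as an algebra homomorphism. -/
def substHom (g : Matrix (Fin 2) (Fin 2) k) : MvPolynomial (Fin 2) k →ₐ[k] MvPolynomial (Fin 2) k :=
  aeval (fun i : Fin 2 => C (g i 0) * X 0 + C (g i 1) * X 1)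

/-- The action of `g` on coefficient vectors of binary forms of degree `d`; for `d = 8` this is
`octAct`. -/
def actCoeffs (d : ℕ) (g : Matrix (Fin 2) (Fin 2) k) (a : Fin (d + 1) → k) : Fin (d + 1) → k :=
  formCoeffs d (substHom g (binForm d a))

lemma binForm_eq_sum_monomial (d : ℕ) (a : Fin (d + 1) → k) :
    binForm d a = ∑ i : Fin (d + 1), monomial (binExponent d i) (a i) := by
  refine Finset.sum_congr rfl fun i _ => ?_
  rw [mul_assoc, X_pow_eq_monomial, X_pow_eq_monomial, monomial_mul, C_mul_monomial, one_mul,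
    mul_one, binExponent]

@[simp]
lemma formCoeffs_binForm (d : ℕ) (a : Fin (d + 1) → k) : formCoeffs d (binForm d a) = a := by
  funext i
  have exponent_ne (j : Fin (d + 1)) (hj : j ≠ i) : binExponent d j ≠ binExponent d i := fun h =>
    hj (Fin.ext (by simpa [binExponent] using DFunLike.congr_fun h 0))
  rw [formCoeffs, binForm_eq_sum_monomial, coeff_sum, Finset.sum_eq_single i
    (fun j _ hj => by rw [coeff_monomial, if_neg (exponent_ne j hj)]) (by simp), coeff_monomial,
    if_pos rfl]

lemma binForm_injective (d : ℕ) : Function.Injective (binForm (k := k) d) :=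
  Function.LeftInverse.injective (formCoeffs_binForm d)

lemma isHomogeneous_binForm (d : ℕ) (a : Fin (d + 1) → k) : (binForm d a).IsHomogeneous d := by
  rw [binForm_eq_sum_monomial]
  refine IsHomogeneous.sum _ _ _ fun i _ => isHomogeneous_monomial _ ?_
  simp only [binExponent, map_add, Finsupp.degree_single]
  omega

lemma binForm_formCoeffs {d : ℕ} {p : MvPolynomial (Fin 2) k} (hp : p.IsHomogeneous d) :
    binForm d (formCoeffs d p) = p := by
  ext m
  by_cases hm : m.degree = d
  · have hsum : m 0 + m 1 = d := by
      rw [← hm, Finsupp.degree_eq_sum, Fin.sum_univ_two]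
    have hexp : m = binExponent d (m 0) := by
      ext i
      fin_cases i
      · simp [binExponent]
      · simp [binExponent]
        omega
    have hcoeff := congrFun (formCoeffs_binForm d (formCoeffs d p)) ⟨m 0, by omega⟩
    simpa only [formCoeffs, ← hexp] using hcoeff
  · rw [hp.coeff_eq_zero hm, (isHomogeneous_binForm d _).coeff_eq_zero hm]

@[simp]
lemma substHom_C (g : Matrix (Fin 2) (Fin 2) k) (u : k) : substHom g (C u) = C u :=
  (substHom g).commutes u

@[simp]
lemma substHom_X (g : Matrix (Fin 2) (Fin 2) k) (i : Fin 2) :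
    substHom g (X i) = C (g i 0) * X 0 + C (g i 1) * X 1 :=
  aeval_X _ i

lemma isHomogeneous_substHom (g : Matrix (Fin 2) (Fin 2) k) {p : MvPolynomial (Fin 2) k} {d : ℕ}
    (hp : p.IsHomogeneous d) : (substHom g p).IsHomogeneous d := by
  simpa only [one_mul, substHom] using hp.aeval _ fun i : Fin 2 =>
    (isHomogeneous_C_mul_X (g i 0) 0).add (isHomogeneous_C_mul_X (g i 1) (1 : Fin 2))

lemma constantCoeff_substHom (g : Matrix (Fin 2) (Fin 2) k) (p : MvPolynomial (Fin 2) k) :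
    constantCoeff (substHom g p) = constantCoeff p := by
  induction p using MvPolynomial.induction_on with
  | C u => rw [substHom_C]
  | add p q hp hq => rw [map_add, map_add, map_add, hp, hq]
  | mul_X p i _ => simp

lemma substHom_binForm (d : ℕ) (g : Matrix (Fin 2) (Fin 2) k) (a : Fin (d + 1) → k) :
    substHom g (binForm d a) = binForm d (actCoeffs d g a) :=
  (binForm_formCoeffs (isHomogeneous_substHom g (isHomogeneous_binForm d a))).symm

end Forms

section Nullcone

variable {d : ℕ}

lemma eval_actHom (g : Matrix (Fin 2) (Fin 2) k) (a : Fin (d + 1) → k)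
    (I : MvPolynomial (Fin (d + 1)) k) :
    eval a (actHom k d g I) = eval (actCoeffs d g a) I := by
  have eval_actPoly : (fun i => eval a (actPoly k d g i)) = actCoeffs d g a := by
    funext i
    rw [actPoly, ← coeff_map]
    simp [actCoeffs, formCoeffs, binExponent, substGen, genForm, binForm, algebraMap_eq]
  rw [actHom, ← eval_actPoly, ← coe_aeval_eq_eval, ← coe_aeval_eq_eval, AlgHom.coe_toRingHom,
    AlgHom.coe_toRingHom, ← AlgHom.comp_apply, comp_aeval]

lemma mem_invariantRing_iff {I : MvPolynomial (Fin (d + 1)) k} :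
    I ∈ invariantRing k d ↔
      ∀ g : Matrix.SpecialLinearGroup (Fin 2) k, actHom k d g I = I := by
  simp [invariantRing, Algebra.mem_iInf, AlgHom.mem_equalizer]

lemma eval_actCoeffs {I : MvPolynomial (Fin (d + 1)) k} (hI : I ∈ invariantRing k d)
    {g : Matrix (Fin 2) (Fin 2) k} (hg : g.det = 1) (a : Fin (d + 1) → k) :
    eval (actCoeffs d g a) I = eval a I := by
  rw [← eval_actHom, mem_invariantRing_iff.1 hI ⟨g, hg⟩]

lemma mem_nullcone_of_actCoeffs_mem {g : Matrix (Fin 2) (Fin 2) k} (hg : g.det = 1)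
    {a : Fin (d + 1) → k} (ha : actCoeffs d g a ∈ nullcone k d) : a ∈ nullcone k d := by
  intro I hI n hn hom
  rw [← eval_actCoeffs hI hg]
  exact ha I hI n hn hom

lemma eval_eq_zero_of_mem_nullcone [Infinite k] {P : MvPolynomial (Fin (d + 1)) k} {n : ℕ}
    (hn : 0 < n) (hP : P.IsHomogeneous n)
    (hinv : ∀ g : Matrix (Fin 2) (Fin 2) k, g.det = 1 →
      ∀ a, eval (actCoeffs d g a) P = eval a P)
    {a : Fin (d + 1) → k} (ha : a ∈ nullcone k d) : eval a P = 0 := by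
  refine ha P (mem_invariantRing_iff.2 fun g => MvPolynomial.funext fun b => ?_) n hn hP
  rw [eval_actHom, hinv g g.2]

lemma actCoeffs_diagonal {t : k} (ht : t ≠ 0) {a : Fin (d + 1) → k}
    (ha : ∀ i : Fin (d + 1), 2 * (i : ℕ) ≤ d → a i = 0) :
    actCoeffs d !![t, 0; 0, t⁻¹] a = fun i => a i * t ^ (2 * (i : ℕ) - d) := by
  apply binForm_injective
  rw [← substHom_binForm, binForm, binForm, map_sum]
  refine Finset.sum_congr rfl fun i _ => ?_
  by_cases hi : 2 * (i : ℕ) ≤ d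
  · simp [ha i hi]
  · have weight : t ^ (i : ℕ) * t⁻¹ ^ (d - (i : ℕ)) = t ^ (2 * (i : ℕ) - d) := by
      rw [inv_pow, ← pow_sub₀ t ht (by omega)]
      congr 1
      omega
    simp only [map_mul, map_pow, substHom_C, substHom_X, ← weight, Matrix.of_apply,
      Matrix.cons_val', Matrix.cons_val_zero, Matrix.cons_val_one, Matrix.cons_val_fin_one,
      map_zero, zero_mul, add_zero, zero_add]
    ring

-- The torus element `diag(t, t⁻¹)` scales `aᵢ` by `t ^ (2i - d)`, so an invariant, constant along
-- the orbit, takes its value at the limit `t → 0`, which is the zero form.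
theorem mem_nullcone_of_forall_two_mul_le [Infinite k] {a : Fin (d + 1) → k}
    (ha : ∀ i : Fin (d + 1), 2 * (i : ℕ) ≤ d → a i = 0) : a ∈ nullcone k d := by
  intro I hI n hn hom
  let q : Polynomial k :=
    aeval (fun i => Polynomial.C (a i) * Polynomial.X ^ (2 * (i : ℕ) - d)) I
  have eval_q (t : k) : q.eval t = eval (fun i => a i * t ^ (2 * (i : ℕ) - d)) I := by
    rw [← Polynomial.coe_aeval_eq_eval, ← AlgHom.comp_apply, comp_aeval, ← coe_aeval_eq_eval]
    simp
  have eval_q_of_ne {t : k} (ht : t ≠ 0) : q.eval t = eval a I := by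
    rw [eval_q, ← actCoeffs_diagonal ht ha, eval_actCoeffs hI (by simp [Matrix.det_fin_two, ht])]
  have q_const : q = Polynomial.C (eval a I) :=
    Polynomial.eq_of_infinite_eval_eq _ _ <|
      (Set.finite_singleton (0 : k)).infinite_compl.mono fun t ht => by simp [eval_q_of_ne ht]
  have limit : (fun i : Fin (d + 1) => a i * 0 ^ (2 * (i : ℕ) - d)) = 0 := by
    funext i
    by_cases hi : 2 * (i : ℕ) ≤ d
    · rw [ha i hi, zero_mul, Pi.zero_apply]
    · rw [zero_pow (by omega), mul_zero, Pi.zero_apply]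
  calc eval a I = q.eval 0 := by rw [q_const, Polynomial.eval_C]
    _ = constantCoeff I := by rw [eval_q, limit, eval_zero]
    _ = 0 := hom.coeff_eq_zero (by simpa using hn.ne)

end Nullcone

section Transvectants

open TensorProduct

/-- The operator `∂ᵢ ⊗ ∂ⱼ` on pairs of binary forms. -/
def pderivTensor (k : Type*) [Field k] (i j : Fin 2) :
    Module.End k (MvPolynomial (Fin 2) k ⊗[k] MvPolynomial (Fin 2) k) :=
  TensorProduct.map (pderiv i).toLinearMap (pderiv j).toLinearMap

/-- Cayley's omega process `∂/∂X ⊗ ∂/∂Y - ∂/∂Y ⊗ ∂/∂X` on pairs of binary forms. -/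
def cayleyOmega (k : Type*) [Field k] :
    Module.End k (MvPolynomial (Fin 2) k ⊗[k] MvPolynomial (Fin 2) k) :=
  pderivTensor k 0 1 - pderivTensor k 1 0

lemma pderiv_pderiv_comm {R σ : Type*} [CommRing R] (i j : σ) (p : MvPolynomial σ R) :
    pderiv i (pderiv j p) = pderiv j (pderiv i p) := by
  classical
  have commutator_eq_zero : ⁅pderiv (R := R) i, pderiv (R := R) j⁆ = 0 := by
    refine MvPolynomial.derivation_ext fun l => ?_
    simp only [Derivation.commutator_apply, pderiv_X, Pi.single_apply, Derivation.coe_zero,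
      Pi.zero_apply]
    split_ifs <;> simp
  rw [← sub_eq_zero, ← Derivation.commutator_apply, commutator_eq_zero, Derivation.zero_apply]

lemma pderivTensor_tmul (i j : Fin 2) (p q : MvPolynomial (Fin 2) k) :
    pderivTensor k i j (p ⊗ₜ q) = pderiv i p ⊗ₜ pderiv j q :=
  TensorProduct.map_tmul _ _ _ _

lemma pderivTensor_commute (i j : Fin 2) :
    Commute (pderivTensor k i j) (pderivTensor k j i) := by
  refine TensorProduct.ext' fun p q => ?_
  simp only [Module.End.mul_apply, pderivTensor_tmul, pderiv_pderiv_comm i j]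

lemma pderivTensor_pow_tmul (i j : Fin 2) (r : ℕ) (p q : MvPolynomial (Fin 2) k) :
    (pderivTensor k i j ^ r) (p ⊗ₜ q) = ((pderiv i)^[r] p) ⊗ₜ ((pderiv j)^[r] q) := by
  rw [pderivTensor, TensorProduct.map_pow, TensorProduct.map_tmul, Module.End.pow_apply,
    Module.End.pow_apply]
  rfl

lemma cayleyOmega_pow_tmul (r : ℕ) (f g : MvPolynomial (Fin 2) k) :
    (cayleyOmega k ^ r) (f ⊗ₜ g) = ∑ j ∈ Finset.range (r + 1), ((-1 : k) ^ j * r.choose j) •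
      (((pderiv 0)^[r - j] ((pderiv 1)^[j] f)) ⊗ₜ[k] ((pderiv 0)^[j] ((pderiv 1)^[r - j] g))) := by
  have omega_eq : cayleyOmega k = (-1 : k) • pderivTensor k 1 0 + pderivTensor k 0 1 := by
    rw [cayleyOmega]
    module
  rw [omega_eq, ((pderivTensor_commute 1 0).smul_left (-1 : k)).add_pow, LinearMap.sum_apply]
  refine Finset.sum_congr rfl fun j _ => ?_
  have iterate_comm : (pderiv (R := k) (0 : Fin 2))^[r - j] ((pderiv 1)^[j] f) =
      (pderiv 1)^[j] ((pderiv 0)^[r - j] f) :=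
    Function.Commute.iterate_iterate (pderiv_pderiv_comm 0 1) (r - j) j f
  rw [← nsmul_eq_mul', smul_pow, LinearMap.smul_apply, Module.End.mul_apply, LinearMap.smul_apply,
    pderivTensor_pow_tmul, pderivTensor_pow_tmul, iterate_comm, ← Nat.cast_smul_eq_nsmul k,
    smul_smul, mul_comm]

/-- The `r`-th transvectant as a bilinear map. -/
def transvectantBilin (k : Type*) [Field k] (n m r : ℕ) :
    MvPolynomial (Fin 2) k →ₗ[k] MvPolynomial (Fin 2) k →ₗ[k] MvPolynomial (Fin 2) k :=
  ((((m - r).factorial * (n - r).factorial : ℕ) : k) / ((n.factorial * m.factorial : ℕ) : k)) •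
    (TensorProduct.mk k _ _).compr₂ (LinearMap.mul' k _ ∘ₗ cayleyOmega k ^ r)

lemma transvectantBilin_apply (n m r : ℕ) (f g : MvPolynomial (Fin 2) k) :
    transvectantBilin k n m r f g = transvectant n m r f g := by
  simp only [transvectantBilin, transvectant, LinearMap.smul_apply, LinearMap.compr₂_apply,
    TensorProduct.mk_apply, LinearMap.comp_apply, cayleyOmega_pow_tmul, map_sum, map_smul,
    LinearMap.mul'_apply, smul_eq_C_mul, mul_assoc]

lemma pderiv_substHom (g : Matrix (Fin 2) (Fin 2) k) (i : Fin 2) (p : MvPolynomial (Fin 2) k) :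
    pderiv i (substHom g p) =
      g 0 i • substHom g (pderiv 0 p) + g 1 i • substHom g (pderiv 1 p) := by
  induction p using MvPolynomial.induction_on with
  | C u => simp
  | add p q hp hq => simp only [map_add, hp, hq, smul_add, add_add_add_comm]
  | mul_X p j hp =>
    have pderiv_X_subst : pderiv i (substHom g (X j)) = C (g j i) := by
      fin_cases i <;> simp [pderiv_X]
    rw [map_mul, Derivation.leibniz, hp, pderiv_X_subst]
    simp only [Derivation.leibniz, map_add, map_mul, smul_eq_mul, smul_eq_C_mul]
    fin_cases j <;> simp [pderiv_X] <;> ring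

lemma cayleyOmega_comp_map_substHom (g : Matrix (Fin 2) (Fin 2) k) :
    cayleyOmega k ∘ₗ TensorProduct.map (substHom g).toLinearMap (substHom g).toLinearMap =
      g.det • TensorProduct.map (substHom g).toLinearMap (substHom g).toLinearMap ∘ₗ
        cayleyOmega k := by
  refine TensorProduct.ext' fun p q => ?_
  simp only [cayleyOmega, LinearMap.comp_apply, LinearMap.sub_apply, LinearMap.smul_apply,
    TensorProduct.map_tmul, pderivTensor_tmul, AlgHom.toLinearMap_apply, map_sub, pderiv_substHom,
    TensorProduct.add_tmul, TensorProduct.tmul_add, ← TensorProduct.smul_tmul',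
    TensorProduct.tmul_smul, Matrix.det_fin_two]
  module

lemma mul'_comp_map_algHom {R A B : Type*} [CommSemiring R] [CommSemiring A] [CommSemiring B]
    [Algebra R A] [Algebra R B] (φ : A →ₐ[R] B) :
    LinearMap.mul' R B ∘ₗ TensorProduct.map φ.toLinearMap φ.toLinearMap =
      φ.toLinearMap ∘ₗ LinearMap.mul' R A :=
  TensorProduct.ext' fun x y => by simp

lemma cayleyOmega_pow_map_substHom (g : Matrix (Fin 2) (Fin 2) k) (r : ℕ)
    (t : MvPolynomial (Fin 2) k ⊗[k] MvPolynomial (Fin 2) k) :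
    (cayleyOmega k ^ r) (TensorProduct.map (substHom g).toLinearMap (substHom g).toLinearMap t) =
      g.det ^ r • TensorProduct.map (substHom g).toLinearMap (substHom g).toLinearMap
        ((cayleyOmega k ^ r) t) := by
  induction r generalizing t with
  | zero => simp
  | succ r ih =>
    have omega_map := LinearMap.congr_fun (cayleyOmega_comp_map_substHom g) t
    simp only [LinearMap.comp_apply, LinearMap.smul_apply] at omega_map
    rw [pow_succ, Module.End.mul_apply, Module.End.mul_apply, omega_map, map_smul, ih, smul_smul,
      pow_succ']

theorem transvectant_substHom (g : Matrix (Fin 2) (Fin 2) k) (n m r : ℕ)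
    (p q : MvPolynomial (Fin 2) k) :
    transvectant n m r (substHom g p) (substHom g q) =
      g.det ^ r • substHom g (transvectant n m r p q) := by
  have mul_map := LinearMap.congr_fun (mul'_comp_map_algHom (substHom g))
    ((cayleyOmega k ^ r) (p ⊗ₜ q))
  simp only [LinearMap.comp_apply, AlgHom.toLinearMap_apply] at mul_map
  have omega_map := cayleyOmega_pow_map_substHom g r (p ⊗ₜ q)
  simp only [TensorProduct.map_tmul, AlgHom.toLinearMap_apply] at omega_map
  simp only [← transvectantBilin_apply, transvectantBilin, LinearMap.smul_apply,
    LinearMap.compr₂_apply, TensorProduct.mk_apply, LinearMap.comp_apply, omega_map, map_smul,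
    mul_map]
  rw [smul_comm]

end Transvectants

section HomogeneousMaps

variable {σ M N P : Type*} [AddCommGroup M] [Module k M] [AddCommGroup N] [Module k N]
  [AddCommGroup P] [Module k P]

/-- The maps from `k^σ` to a vector space given by homogeneous polynomials of degree `n`: sums of
maps `a ↦ Q(a) v` with `Q` a form of degree `n` and `v` a vector. -/
def homogeneousMaps (k : Type*) [Field k] (σ M : Type*) [AddCommGroup M] [Module k M] (n : ℕ) :
    Submodule k ((σ → k) → M) :=
  Submodule.span k {F | ∃ Q ∈ homogeneousSubmodule σ k n, ∃ v : M, F = fun a => eval a Q • v}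

lemma eval_smul_mem_homogeneousMaps {n : ℕ} {Q : MvPolynomial σ k} (hQ : Q.IsHomogeneous n)
    (v : M) : (fun a => eval a Q • v) ∈ homogeneousMaps k σ M n :=
  Submodule.subset_span ⟨Q, hQ, v, rfl⟩

lemma linearMap_comp_mem_homogeneousMaps {n : ℕ} {F : (σ → k) → M}
    (hF : F ∈ homogeneousMaps k σ M n) (L : M →ₗ[k] N) :
    (fun a => L (F a)) ∈ homogeneousMaps k σ N n := by
  induction hF using Submodule.span_induction with
  | mem F hF =>
    obtain ⟨Q, hQ, v, rfl⟩ := hF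
    simpa only [map_smul] using eval_smul_mem_homogeneousMaps hQ (L v)
  | zero => simpa using! zero_mem _
  | add F G _ _ hF hG => simpa using! add_mem hF hG
  | smul u F _ hF => simpa using! Submodule.smul_mem _ u hF

lemma bilinMap_mem_homogeneousMaps {n m : ℕ} {F : (σ → k) → M} {G : (σ → k) → N}
    (hF : F ∈ homogeneousMaps k σ M n) (hG : G ∈ homogeneousMaps k σ N m)
    (B : M →ₗ[k] N →ₗ[k] P) :
    (fun a => B (F a) (G a)) ∈ homogeneousMaps k σ P (n + m) := by
  induction hF, hG using Submodule.span_induction₂ with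
  | mem_mem F G hF hG =>
    obtain ⟨Q, hQ, v, rfl⟩ := hF
    obtain ⟨R, hR, w, rfl⟩ := hG
    convert eval_smul_mem_homogeneousMaps (IsHomogeneous.mul hQ hR) (B v w) using 2 with a
    rw [map_smul, LinearMap.map_smul₂, smul_smul, map_mul, mul_comm]
  | zero_left G _ => simpa using! zero_mem _
  | zero_right F _ => simpa using! zero_mem _
  | add_left F F' G _ _ _ hF hF' => simpa using! add_mem hF hF'
  | add_right F G G' _ _ _ hG hG' => simpa using! add_mem hG hG'
  | smul_left u F G _ _ hF => simpa using! Submodule.smul_mem _ u hF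
  | smul_right u F G _ _ hF => simpa using! Submodule.smul_mem _ u hF

lemma exists_eval_eq_of_mem_homogeneousMaps {n : ℕ} {F : (σ → k) → k}
    (hF : F ∈ homogeneousMaps k σ k n) :
    ∃ Q : MvPolynomial σ k, Q.IsHomogeneous n ∧ ∀ a, eval a Q = F a := by
  induction hF using Submodule.span_induction with
  | mem F hF =>
    obtain ⟨Q, hQ, v, rfl⟩ := hF
    exact ⟨v • Q, (homogeneousSubmodule σ k n).smul_mem v hQ, fun a => by simp [mul_comm]⟩
  | zero => exact ⟨0, isHomogeneous_zero _ _ _, fun a => by simp⟩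
  | add F G _ _ hF hG =>
    obtain ⟨⟨Q, hQ, eval_Q⟩, ⟨R, hR, eval_R⟩⟩ := And.intro hF hG
    exact ⟨Q + R, hQ.add hR, fun a => by simp [eval_Q, eval_R]⟩
  | smul u F _ hF =>
    obtain ⟨Q, hQ, eval_Q⟩ := hF
    exact ⟨u • Q, (homogeneousSubmodule σ k n).smul_mem u hQ, fun a => by simp [eval_Q]⟩

lemma binForm_mem_homogeneousMaps (d : ℕ) :
    binForm d ∈ homogeneousMaps k (Fin (d + 1)) (MvPolynomial (Fin 2) k) 1 := by
  have binForm_eq_sum : binForm (k := k) d = ∑ i : Fin (d + 1), fun a =>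
      eval a (X i : MvPolynomial (Fin (d + 1)) k) •
        (X 0 ^ (i : ℕ) * X 1 ^ (d - (i : ℕ)) : MvPolynomial (Fin 2) k) := by
    funext a
    simp [binForm, smul_eq_C_mul, mul_assoc]
  rw [binForm_eq_sum]
  exact Submodule.sum_mem _ fun i _ => eval_smul_mem_homogeneousMaps (isHomogeneous_X k i) _

lemma transvectant_mem_homogeneousMaps {s t : ℕ} {F G : (σ → k) → MvPolynomial (Fin 2) k}
    (hF : F ∈ homogeneousMaps k σ _ s) (hG : G ∈ homogeneousMaps k σ _ t) (n m r : ℕ) :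
    (fun a => transvectant n m r (F a) (G a)) ∈
      homogeneousMaps k σ (MvPolynomial (Fin 2) k) (s + t) := by
  simpa only [transvectantBilin_apply] using
    bilinMap_mem_homogeneousMaps hF hG (transvectantBilin k n m r)

end HomogeneousMaps

section Covariants

variable {d s t : ℕ} {F G : (Fin (d + 1) → k) → MvPolynomial (Fin 2) k}

/-- `F` is a covariant of degree `s` of binary forms of degree `d`: an `SL₂`-equivariant map to
binary forms which is homogeneous of degree `s` in the coefficients. The order of the covariant is
not recorded. -/
structure IsCovariant (d s : ℕ) (F : (Fin (d + 1) → k) → MvPolynomial (Fin 2) k) : Prop where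
  mem_homogeneousMaps : F ∈ homogeneousMaps k (Fin (d + 1)) (MvPolynomial (Fin 2) k) s
  map_actCoeffs (g : Matrix (Fin 2) (Fin 2) k) (hg : g.det = 1) (a : Fin (d + 1) → k) :
    F (actCoeffs d g a) = substHom g (F a)

lemma isCovariant_binForm (d : ℕ) : IsCovariant (k := k) d 1 (binForm d) where
  mem_homogeneousMaps := binForm_mem_homogeneousMaps d
  map_actCoeffs g _ a := (substHom_binForm d g a).symm

lemma IsCovariant.transvectant (hF : IsCovariant d s F) (hG : IsCovariant d t G) (n m r : ℕ) :
    IsCovariant d (s + t) (fun a => transvectant n m r (F a) (G a)) where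
  mem_homogeneousMaps :=
    transvectant_mem_homogeneousMaps hF.mem_homogeneousMaps hG.mem_homogeneousMaps n m r
  map_actCoeffs g hg a := by
    rw [hF.map_actCoeffs g hg, hG.map_actCoeffs g hg, transvectant_substHom, hg, one_pow, one_smul]

lemma IsCovariant.constantCoeff_actCoeffs (hF : IsCovariant d s F)
    {g : Matrix (Fin 2) (Fin 2) k} (hg : g.det = 1) (a : Fin (d + 1) → k) :
    constantCoeff (F (actCoeffs d g a)) = constantCoeff (F a) := by
  rw [hF.map_actCoeffs g hg, constantCoeff_substHom]

theorem IsCovariant.constantCoeff_eq_zero_of_mem_nullcone [Infinite k] (hF : IsCovariant d s F)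
    (hs : 0 < s) {a : Fin (d + 1) → k} (ha : a ∈ nullcone k d) : constantCoeff (F a) = 0 := by
  obtain ⟨Q, hQ, eval_Q⟩ := exists_eval_eq_of_mem_homogeneousMaps
    (linearMap_comp_mem_homogeneousMaps hF.mem_homogeneousMaps (lcoeff k 0))
  have eval_eq (b : Fin (d + 1) → k) : eval b Q = constantCoeff (F b) := eval_Q b
  rw [← eval_eq]
  refine eval_eq_zero_of_mem_nullcone hs hQ (fun g hg b => ?_) ha
  rw [eval_eq, eval_eq, hF.constantCoeff_actCoeffs hg]

end Covariants

section OctavicInvariants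

/-- The simultaneous vanishing of `J₂, …, J₇`. -/
def JVanish (a : Fin 9 → k) : Prop :=
  J2 a = 0 ∧ J3 a = 0 ∧ J4 a = 0 ∧ J5 a = 0 ∧ J6 a = 0 ∧ J7 a = 0

lemma isCovariant_octForm : IsCovariant (k := k) 8 1 octForm :=
  isCovariant_binForm 8

lemma isCovariant_covg : IsCovariant (k := k) 8 2 covg :=
  isCovariant_octForm.transvectant isCovariant_octForm 8 8 4

lemma isCovariant_covk : IsCovariant (k := k) 8 2 covk :=
  isCovariant_octForm.transvectant isCovariant_octForm 8 8 6

lemma isCovariant_covh : IsCovariant (k := k) 8 4 covh :=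
  isCovariant_covk.transvectant isCovariant_covk 4 4 2

lemma isCovariant_covm : IsCovariant (k := k) 8 3 covm :=
  isCovariant_octForm.transvectant isCovariant_covk 8 4 4

lemma jVanish_of_mem_nullcone [Infinite k] {a : Fin 9 → k} (ha : a ∈ nullcone k 8) :
    JVanish a := by
  have vanish {s t : ℕ} {F G : (Fin 9 → k) → MvPolynomial (Fin 2) k} (hF : IsCovariant 8 s F)
      (hG : IsCovariant 8 t G) (hs : 0 < s) (n : ℕ) :
      constantCoeff (transvectant n n n (F a) (G a)) = 0 :=
    (hF.transvectant hG n n n).constantCoeff_eq_zero_of_mem_nullcone (by omega) ha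
  refine ⟨?_, ?_, ?_, ?_, ?_, ?_⟩
  · rw [J2, vanish isCovariant_octForm isCovariant_octForm one_pos, mul_zero]
  · rw [J3, vanish isCovariant_octForm isCovariant_covg one_pos, mul_zero]
  · rw [J4, vanish isCovariant_covk isCovariant_covk two_pos, mul_zero]
  · rw [J5, vanish isCovariant_covm isCovariant_covk three_pos, mul_zero]
  · rw [J6, vanish isCovariant_covk isCovariant_covh two_pos, mul_zero]
  · rw [J7, vanish isCovariant_covm isCovariant_covh three_pos, mul_zero]

lemma JVanish.map_actCoeffs {a : Fin 9 → k} (ha : JVanish a) {g : Matrix (Fin 2) (Fin 2) k}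
    (hg : g.det = 1) : JVanish (actCoeffs 8 g a) := by
  have invariant {s t : ℕ} {F G : (Fin 9 → k) → MvPolynomial (Fin 2) k} (hF : IsCovariant 8 s F)
      (hG : IsCovariant 8 t G) (n : ℕ) :
      constantCoeff (transvectant n n n (F (actCoeffs 8 g a)) (G (actCoeffs 8 g a))) =
        constantCoeff (transvectant n n n (F a) (G a)) :=
    (hF.transvectant hG n n n).constantCoeff_actCoeffs hg a
  simpa only [JVanish, J2, J3, J4, J5, J6, J7, invariant isCovariant_octForm isCovariant_octForm,
    invariant isCovariant_octForm isCovariant_covg, invariant isCovariant_covk isCovariant_covk,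
    invariant isCovariant_covm isCovariant_covk, invariant isCovariant_covk isCovariant_covh,
    invariant isCovariant_covm isCovariant_covh] using ha

end OctavicInvariants

section BinomialCoefficients

open Finset.HasAntidiagonal (antidiagonal)

/-- The coefficient vector of the form with binomially normalised coefficients `c`; entries of `c`
beyond `n` are irrelevant. -/
def binomCoeffs (n : ℕ) (c : ℕ → k) : Fin (n + 1) → k := fun i => c i * n.choose i

/-- The form `∑ (n choose i) cᵢ Xⁱ Yⁿ⁻ⁱ` with binomially normalised coefficients `c`. -/
def binomForm (n : ℕ) (c : ℕ → k) : MvPolynomial (Fin 2) k := binForm n (binomCoeffs n c)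

/-- The coefficient of `Xᵗ Yⁿ⁺ᵐ⁻²ʳ⁻ᵗ` in the `r`-th transvectant of the forms of degrees `n` and `m`
with binomially normalised coefficients `c` and `e`. -/
def transvectantCoeff (n m r : ℕ) (c e : ℕ → k) (t : ℕ) : k :=
  ∑ j ∈ Finset.range (r + 1), (-1) ^ j * r.choose j * ∑ p ∈ antidiagonal t,
    c (p.1 + (r - j)) * (n - r).choose p.1 * (e (p.2 + j) * (m - r).choose p.2)

/-- The normalised coefficients of the form obtained by the substitution `Y ↦ Y + s X`. -/
def shear (s : k) (c : ℕ → k) (i : ℕ) : k :=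
  ∑ j ∈ Finset.range (i + 1), i.choose j * s ^ (i - j) * c j

/-- The normalised coefficients of the form of degree `n` obtained by the substitution
`(X, Y) ↦ (Y, -X)`. -/
def quarterTurn (n : ℕ) (c : ℕ → k) (i : ℕ) : k := (-1) ^ i * c (n - i)

lemma cast_choose_ne_zero {n i : ℕ} (hn : (n.factorial : k) ≠ 0) (hi : i ≤ n) :
    (n.choose i : k) ≠ 0 := by
  rw [← Nat.choose_mul_factorial_mul_factorial hi, Nat.cast_mul, Nat.cast_mul] at hn
  exact left_ne_zero_of_mul (left_ne_zero_of_mul hn)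

lemma binomCoeffs_div_choose {n : ℕ} (hn : (n.factorial : k) ≠ 0) (a : ℕ → k) :
    binomCoeffs n (fun i => a i / n.choose i) = fun i : Fin (n + 1) => a i :=
  funext fun i => div_mul_cancel₀ _ (cast_choose_ne_zero hn i.is_le)

lemma exists_binomCoeffs_eq {n : ℕ} (hn : (n.factorial : k) ≠ 0) (a : Fin (n + 1) → k) :
    ∃ c, binomCoeffs n c = a := by
  refine ⟨_, (binomCoeffs_div_choose hn fun i => if h : i < n + 1 then a ⟨i, h⟩ else 0).trans ?_⟩
  exact funext fun i => dif_pos i.2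

lemma eq_of_binomForm_eq {n i : ℕ} (hn : (n.factorial : k) ≠ 0) (hi : i ≤ n) {c e : ℕ → k}
    (h : binomForm n c = binomForm n e) : c i = e i :=
  mul_right_cancel₀ (cast_choose_ne_zero hn hi)
    (congrFun (binForm_injective n h) ⟨i, Nat.lt_succ_iff.2 hi⟩)

lemma binForm_eq_sum_range (n : ℕ) (c : ℕ → k) :
    binForm n (fun i => c i) = ∑ i ∈ Finset.range (n + 1), C (c i) * X 0 ^ i * X 1 ^ (n - i) :=
  (Finset.sum_range fun i => C (c i) * X 0 ^ i * X 1 ^ (n - i)).symm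

lemma binomForm_eq_sum (n : ℕ) (c : ℕ → k) :
    binomForm n c =
      ∑ i ∈ Finset.range (n + 1), C (c i * n.choose i) * X 0 ^ i * X 1 ^ (n - i) :=
  binForm_eq_sum_range n fun i => c i * n.choose i

lemma pderiv_zero_binomForm (n : ℕ) (c : ℕ → k) :
    pderiv 0 (binomForm (n + 1) c) = (n + 1) • binomForm n (fun i => c (i + 1)) := by
  rw [binomForm_eq_sum, binomForm_eq_sum, map_sum, Finset.sum_range_succ', Finset.smul_sum,
    add_eq_left.2 (by simp)]
  refine Finset.sum_congr rfl fun i _ => ?_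
  have absorption : ((n + 1 : ℕ) : k) * n.choose i = (n + 1).choose (i + 1) * (i + 1 : ℕ) := by
    rw [← Nat.cast_mul, ← Nat.cast_mul, Nat.add_one_mul_choose_eq]
  calc pderiv (0 : Fin 2) (C (c (i + 1) * (n + 1).choose (i + 1)) * X 0 ^ (i + 1) *
        X 1 ^ (n + 1 - (i + 1)) : MvPolynomial (Fin 2) k)
      = C (c (i + 1)) * C ((n + 1).choose (i + 1) * (i + 1 : ℕ) : k) * X 0 ^ i * X 1 ^ (n - i) := by
        simp [Derivation.leibniz, Derivation.leibniz_pow]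
        ring
    _ = (n + 1) • (C (c (i + 1) * n.choose i) * X 0 ^ i * X 1 ^ (n - i)) := by
        rw [← absorption, nsmul_eq_mul]
        simp only [map_mul, map_natCast]
        ring

lemma pderiv_one_binomForm (n : ℕ) (c : ℕ → k) :
    pderiv 1 (binomForm (n + 1) c) = (n + 1) • binomForm n c := by
  rw [binomForm_eq_sum, binomForm_eq_sum, map_sum, Finset.sum_range_succ, Finset.smul_sum,
    add_eq_left.2 (by simp)]
  refine Finset.sum_congr rfl fun i hi => ?_
  have hin : n + 1 - i = n - i + 1 := by grind
  have absorption : ((n + 1 : ℕ) : k) * n.choose i = (n + 1).choose i * (n - i + 1 : ℕ) := by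
    rw [← hin, ← Nat.cast_mul, ← Nat.cast_mul, ← Nat.choose_mul_succ_eq, mul_comm]
  calc pderiv (1 : Fin 2) (C (c i * (n + 1).choose i) * X 0 ^ i * X 1 ^ (n + 1 - i) :
        MvPolynomial (Fin 2) k)
      = C (c i) * C ((n + 1).choose i * (n - i + 1 : ℕ) : k) * X 0 ^ i * X 1 ^ (n - i) := by
        rw [hin]
        simp [Derivation.leibniz, Derivation.leibniz_pow]
        ring
    _ = (n + 1) • (C (c i * n.choose i) * X 0 ^ i * X 1 ^ (n - i)) := by
        rw [← absorption, nsmul_eq_mul]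
        simp only [map_mul, map_natCast]
        ring

lemma iterate_pderiv_zero_binomForm (n p : ℕ) (c : ℕ → k) :
    (pderiv 0)^[p] (binomForm (n + p) c) =
      (n + p).descFactorial p • binomForm n (fun i => c (i + p)) := by
  induction p generalizing c with
  | zero => simp
  | succ p ih =>
    rw [Function.iterate_succ_apply, ← add_assoc, pderiv_zero_binomForm, iterate_map_nsmul, ih,
      smul_smul, Nat.succ_descFactorial_succ]
    simp only [add_assoc]

lemma iterate_pderiv_one_binomForm (n p : ℕ) (c : ℕ → k) :
    (pderiv 1)^[p] (binomForm (n + p) c) = (n + p).descFactorial p • binomForm n c := by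
  induction p with
  | zero => simp
  | succ p ih =>
    rw [Function.iterate_succ_apply, ← add_assoc, pderiv_one_binomForm, iterate_map_nsmul, ih,
      smul_smul, Nat.succ_descFactorial_succ]

lemma iterate_pderiv_binomForm {n p q r : ℕ} (hr : p + q = r) (hn : r ≤ n) (c : ℕ → k) :
    (pderiv 0)^[p] ((pderiv 1)^[q] (binomForm n c)) =
      n.descFactorial r • binomForm (n - r) (fun i => c (i + p)) := by
  obtain ⟨l, rfl⟩ : ∃ l, n = l + p + q := ⟨n - r, by omega⟩
  have descFactorial_split :=
    Nat.descFactorial_mul_descFactorial (n := l + p + q) (by omega : q ≤ r)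
  rw [Nat.add_sub_cancel, ← hr, Nat.add_sub_cancel] at descFactorial_split
  rw [iterate_pderiv_one_binomForm, iterate_map_nsmul, iterate_pderiv_zero_binomForm,
    smul_smul, mul_comm, descFactorial_split, ← hr, add_assoc, Nat.add_sub_cancel]

lemma sum_range_mul_sum_range_eq_sum_antidiagonal {R : Type*} [CommSemiring R] {n m : ℕ}
    {f g : ℕ → R} (hf : ∀ i, n < i → f i = 0) (hg : ∀ j, m < j → g j = 0) :
    (∑ i ∈ Finset.range (n + 1), f i) * ∑ j ∈ Finset.range (m + 1), g j =
      ∑ t ∈ Finset.range (n + m + 1), ∑ p ∈ antidiagonal t, f p.1 * g p.2 := by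
  rw [Finset.sum_mul_sum, ← Finset.sum_product',
    ← Finset.sum_fiberwise_of_maps_to (g := fun p => p.1 + p.2) (t := Finset.range (n + m + 1))
      (by simp only [Finset.mem_product, Finset.mem_range]; omega)]
  refine Finset.sum_congr rfl fun t _ => Finset.sum_subset (by intro p; simp) fun p hp hp' => ?_
  have outside : n < p.1 ∨ m < p.2 := by
    by_contra! h
    exact hp' (by simp_all)
  rcases outside with h | h
  · rw [hf _ h, zero_mul]
  · rw [hg _ h, mul_zero]

lemma binomForm_mul_binomForm (n m : ℕ) (c e : ℕ → k) :
    binomForm n c * binomForm m e = binForm (n + m) fun t =>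
      ∑ p ∈ antidiagonal (t : ℕ), c p.1 * n.choose p.1 * (e p.2 * m.choose p.2) := by
  rw [binForm_eq_sum_range (n + m) fun t =>
    ∑ p ∈ antidiagonal t, c p.1 * n.choose p.1 * (e p.2 * m.choose p.2),
    binomForm_eq_sum, binomForm_eq_sum, sum_range_mul_sum_range_eq_sum_antidiagonal
      (fun i hi => by simp [Nat.choose_eq_zero_of_lt hi])
      (fun j hj => by simp [Nat.choose_eq_zero_of_lt hj])]
  refine Finset.sum_congr rfl fun t _ => ?_
  rw [map_sum, Finset.sum_mul, Finset.sum_mul]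
  refine Finset.sum_congr rfl fun p hp => ?_
  rw [Finset.HasAntidiagonal.mem_antidiagonal] at hp
  by_cases hpn : n < p.1
  · simp [Nat.choose_eq_zero_of_lt hpn]
  by_cases hpm : m < p.2
  · simp [Nat.choose_eq_zero_of_lt hpm]
  rw [← hp, show n + m - (p.1 + p.2) = n - p.1 + (m - p.2) by omega]
  simp only [C_mul]
  ring

lemma binForm_sum_mul {ι : Type*} (S : Finset ι) (d : ℕ) (u : ι → k) (v : ι → Fin (d + 1) → k) :
    binForm d (fun i => ∑ j ∈ S, u j * v j i) = ∑ j ∈ S, C (u j) * binForm d (v j) := by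
  simp only [binForm, map_sum, map_mul, Finset.sum_mul, Finset.mul_sum, mul_assoc]
  exact Finset.sum_comm

theorem transvectant_binomForm {n m r : ℕ} (hn : r ≤ n) (hm : r ≤ m)
    (n_factorial : (n.factorial : k) ≠ 0) (m_factorial : (m.factorial : k) ≠ 0) (c e : ℕ → k) :
    transvectant n m r (binomForm n c) (binomForm m e) =
      binForm (n - r + (m - r)) fun t => transvectantCoeff n m r c e t := by
  have normalisation : ((((m - r).factorial * (n - r).factorial : ℕ) : k) /
      ((n.factorial * m.factorial : ℕ) : k)) * (n.descFactorial r * m.descFactorial r) = 1 := by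
    rw [← Nat.factorial_mul_descFactorial hn, Nat.cast_mul] at n_factorial
    rw [← Nat.factorial_mul_descFactorial hm, Nat.cast_mul] at m_factorial
    rw [← Nat.factorial_mul_descFactorial hn, ← Nat.factorial_mul_descFactorial hm]
    push_cast
    field_simp [left_ne_zero_of_mul n_factorial, right_ne_zero_of_mul n_factorial,
      left_ne_zero_of_mul m_factorial, right_ne_zero_of_mul m_factorial]
  have summand : ∀ j ∈ Finset.range (r + 1),
      C ((-1 : k) ^ j * r.choose j) *
        (pderiv 0)^[r - j] ((pderiv 1)^[j] (binomForm n c)) *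
        (pderiv 0)^[j] ((pderiv 1)^[r - j] (binomForm m e)) =
      C ((n.descFactorial r : k) * m.descFactorial r) * (C ((-1 : k) ^ j * r.choose j) *
        (binomForm (n - r) (fun i => c (i + (r - j))) * binomForm (m - r) fun i => e (i + j))) := by
    intro j hj
    rw [iterate_pderiv_binomForm (by grind) hn, iterate_pderiv_binomForm (by grind) hm]
    simp only [nsmul_eq_mul, map_mul, map_natCast]
    ring
  rw [transvectant, Finset.sum_congr rfl summand, ← Finset.mul_sum, ← mul_assoc, ← C_mul,
    normalisation, C_1, one_mul]
  simp only [transvectantCoeff, binomForm_mul_binomForm, binForm_sum_mul]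

/-- The normalised coefficients of the `m`-th transvectant of a form with normalised coefficients
`c` and a form of degree `m` with normalised coefficients `e`. -/
def contractionCoeff (m : ℕ) (c e : ℕ → k) (t : ℕ) : k :=
  ∑ j ∈ Finset.range (m + 1), (-1) ^ j * m.choose j * (c (t + (m - j)) * e j)

lemma transvectantCoeff_self_right (n m : ℕ) (c e : ℕ → k) (t : ℕ) :
    transvectantCoeff n m m c e t = contractionCoeff m c e t * (n - m).choose t := by
  rw [transvectantCoeff, contractionCoeff, Finset.sum_mul]
  refine Finset.sum_congr rfl fun j _ => ?_
  rw [Finset.sum_eq_single_of_mem (t, 0) (by simp)]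
  · simp
    ring
  · rintro ⟨p, q⟩ hpq ne
    have q_pos : 0 < q := by grind [Finset.HasAntidiagonal.mem_antidiagonal]
    rw [Nat.sub_self, Nat.choose_eq_zero_of_lt q_pos, Nat.cast_zero, mul_zero, mul_zero]

lemma transvectant_binomForm_self_right {n m : ℕ} (hmn : m ≤ n)
    (n_factorial : (n.factorial : k) ≠ 0) (c e : ℕ → k) :
    transvectant n m m (binomForm n c) (binomForm m e) =
      binomForm (n - m) (contractionCoeff m c e) := by
  have m_factorial : (m.factorial : k) ≠ 0 := by
    obtain ⟨q, hq⟩ := Nat.factorial_dvd_factorial hmn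
    rw [hq, Nat.cast_mul] at n_factorial
    exact left_ne_zero_of_mul n_factorial
  rw [transvectant_binomForm hmn le_rfl n_factorial m_factorial, Nat.sub_self, add_zero]
  simp only [transvectantCoeff_self_right]
  rfl

lemma constantCoeff_transvectant_binomForm {n : ℕ} (hn : (n.factorial : k) ≠ 0) (c e : ℕ → k) :
    constantCoeff (transvectant n n n (binomForm n c) (binomForm n e)) =
      contractionCoeff n c e 0 := by
  rw [transvectant_binomForm_self_right le_rfl hn, Nat.sub_self]
  simp [binomForm_eq_sum]

lemma substHom_binomForm_shear (n : ℕ) (s : k) (c : ℕ → k) :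
    substHom !![1, 0; s, 1] (binomForm n c) = binomForm n (shear s c) := by
  rw [binomForm_eq_sum, binomForm_eq_sum, map_sum]
  calc ∑ j ∈ Finset.range (n + 1),
        substHom !![1, 0; s, 1] (C (c j * n.choose j) * X 0 ^ j * X 1 ^ (n - j))
      = ∑ j ∈ Finset.range (n + 1), ∑ i ∈ Finset.Ico j (n + 1),
          C (i.choose j * s ^ (i - j) * c j * n.choose i) * X 0 ^ i * X 1 ^ (n - i) := by
        refine Finset.sum_congr rfl fun j hj => ?_
        have hj : j ≤ n := Nat.lt_succ_iff.1 (Finset.mem_range.1 hj)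
        rw [Finset.sum_Ico_eq_sum_range, Nat.succ_sub hj]
        simp only [map_mul, map_pow, substHom_C, substHom_X]
        simp only [Matrix.of_apply, Matrix.cons_val', Matrix.cons_val_zero, Matrix.cons_val_one,
          Matrix.cons_val_fin_one, C_1, C_0, one_mul, zero_mul, add_zero, add_pow, Finset.mul_sum]
        refine Finset.sum_congr rfl fun i _ => ?_
        have choose_mul : (n.choose (j + i) * (j + i).choose j : MvPolynomial (Fin 2) k) =
            n.choose j * (n - j).choose i := by
          rw [← Nat.cast_mul, Nat.choose_mul (Nat.le_add_right j i), Nat.cast_mul,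
            Nat.add_sub_cancel_left]
        simp only [map_natCast, Nat.add_sub_cancel_left, Nat.sub_add_eq]
        linear_combination (-C (c j) * C s ^ i * X 0 ^ (j + i) * X 1 ^ (n - j - i)) * choose_mul
    _ = ∑ i ∈ Finset.range (n + 1), ∑ j ∈ Finset.range (i + 1),
          C (i.choose j * s ^ (i - j) * c j * n.choose i) * X 0 ^ i * X 1 ^ (n - i) :=
        Finset.sum_comm' (by simp only [Finset.mem_range, Finset.mem_Ico]; omega)
    _ = _ := by simp only [shear, map_sum, Finset.sum_mul]

lemma substHom_binomForm_quarterTurn (n : ℕ) (c : ℕ → k) :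
    substHom !![0, 1; -1, 0] (binomForm n c) = binomForm n (quarterTurn n c) := by
  rw [binomForm_eq_sum, binomForm_eq_sum, map_sum, ← Finset.sum_range_reflect]
  refine Finset.sum_congr rfl fun i hi => ?_
  have hi : i ≤ n := Nat.lt_succ_iff.1 (Finset.mem_range.1 hi)
  rw [Nat.add_sub_cancel, Nat.sub_sub_self hi, Nat.choose_symm hi, quarterTurn]
  simp [map_mul, map_pow, neg_pow (X 0 : MvPolynomial (Fin 2) k)]
  ring

lemma actCoeffs_binomCoeffs_shear (n : ℕ) (s : k) (c : ℕ → k) :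
    actCoeffs n !![1, 0; s, 1] (binomCoeffs n c) = binomCoeffs n (shear s c) :=
  binForm_injective n ((substHom_binForm n _ _).symm.trans (substHom_binomForm_shear n s c))

lemma actCoeffs_binomCoeffs_quarterTurn (n : ℕ) (c : ℕ → k) :
    actCoeffs n !![0, 1; -1, 0] (binomCoeffs n c) = binomCoeffs n (quarterTurn n c) :=
  binForm_injective n ((substHom_binForm n _ _).symm.trans (substHom_binomForm_quarterTurn n c))

end BinomialCoefficients

section ExplicitFormulas

lemma CharOK.two_ne_zero (hk : CharOK k) : (2 : k) ≠ 0 :=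
  Ring.two_ne_zero hk.1

lemma CharOK.three_ne_zero (hk : CharOK k) : (3 : k) ≠ 0 :=
  mod_cast CharP.cast_ne_zero_of_ne_of_prime (p := ringChar k) k Nat.prime_three hk.2.1

lemma CharOK.five_ne_zero (hk : CharOK k) : (5 : k) ≠ 0 :=
  mod_cast CharP.cast_ne_zero_of_ne_of_prime (p := ringChar k) k Nat.prime_five hk.2.2.1

lemma CharOK.seven_ne_zero (hk : CharOK k) : (7 : k) ≠ 0 :=
  mod_cast CharP.cast_ne_zero_of_ne_of_prime (p := ringChar k) k Nat.prime_seven hk.2.2.2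

lemma CharOK.factorial_ne_zero (hk : CharOK k) {n : ℕ} (hn : n ≤ 10) : (n.factorial : k) ≠ 0 := by
  obtain ⟨q, hq⟩ := Nat.factorial_dvd_factorial hn
  have factorial_ten : ((n.factorial * q : ℕ) : k) = 2 ^ 8 * 3 ^ 4 * 5 ^ 2 * 7 := by
    rw [← hq, show Nat.factorial 10 = 2 ^ 8 * 3 ^ 4 * 5 ^ 2 * 7 by decide]
    norm_cast
  rw [Nat.cast_mul] at factorial_ten
  refine left_ne_zero_of_mul (b := (q : k)) ?_
  rw [factorial_ten]
  simp [hk.two_ne_zero, hk.three_ne_zero, hk.five_ne_zero, hk.seven_ne_zero]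

/-- The quadratic invariant of octavics in normalised coefficients, proportional to `J₂`. -/
def quadraticInvariant (c : ℕ → k) : k :=
  c 0 * c 8 - 8 * c 1 * c 7 + 28 * c 2 * c 6 - 56 * c 3 * c 5 + 35 * c 4 ^ 2

/-- The cubic invariant of octavics in normalised coefficients, proportional to `J₃`. -/
def cubicInvariant (c : ℕ → k) : k :=
  c 0 * c 4 * c 8 - 4 * c 1 * c 3 * c 8 + 3 * c 2 ^ 2 * c 8 + 12 * c 1 * c 4 * c 7
    - 4 * c 0 * c 5 * c 7 - 8 * c 2 * c 3 * c 7 - 22 * c 2 * c 4 * c 6 - 8 * c 1 * c 5 * c 6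
    + 3 * c 0 * c 6 ^ 2 + 24 * c 3 ^ 2 * c 6 - 36 * c 3 * c 4 * c 5 + 24 * c 2 * c 5 ^ 2
    + 15 * c 4 ^ 3

/-- The quadratic invariant `I` of quartics in normalised coefficients. -/
def quarticI (x : ℕ → k) : k := x 0 * x 4 - 4 * x 1 * x 3 + 3 * x 2 ^ 2

/-- The cubic invariant `J` of quartics (the catalecticant) in normalised coefficients. -/
def quarticJ (x : ℕ → k) : k :=
  x 0 * x 2 * x 4 + 2 * x 1 * x 2 * x 3 - x 1 ^ 2 * x 4 - x 0 * x 3 ^ 2 - x 2 ^ 3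

/-- The normalised coefficients of the covariant quartic `κ` of the octavic with normalised
coefficients `c`. -/
def kappaCoeff (c : ℕ → k) : ℕ → k
  | 0 => 2 * (c 0 * c 6 - 6 * c 1 * c 5 + 15 * c 2 * c 4 - 10 * c 3 ^ 2)
  | 1 => c 0 * c 7 - 5 * c 1 * c 6 + 9 * c 2 * c 5 - 5 * c 3 * c 4
  | 2 => (c 0 * c 8 - 2 * c 1 * c 7 - 8 * c 2 * c 6 + 34 * c 3 * c 5 - 25 * c 4 ^ 2) / 3
  | 3 => c 1 * c 8 - 5 * c 2 * c 7 + 9 * c 3 * c 6 - 5 * c 4 * c 5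
  | 4 => 2 * (c 2 * c 8 - 6 * c 3 * c 7 + 15 * c 4 * c 6 - 10 * c 5 ^ 2)
  | _ => 0

/-- The normalised coefficients of the Hessian covariant of the quartic with normalised
coefficients `x`. -/
def hessianCoeff (x : ℕ → k) : ℕ → k
  | 0 => 2 * (x 0 * x 2 - x 1 ^ 2)
  | 1 => x 0 * x 3 - x 1 * x 2
  | 2 => (x 0 * x 4 + 2 * x 1 * x 3 - 3 * x 2 ^ 2) / 3
  | 3 => x 1 * x 4 - x 2 * x 3
  | 4 => 2 * (x 2 * x 4 - x 3 ^ 2)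
  | _ => 0

lemma kappaCoeff_zero_eq_zero_iff (hk : CharOK k) {c : ℕ → k} :
    kappaCoeff c 0 = 0 ↔ c 0 * c 6 - 6 * c 1 * c 5 + 15 * c 2 * c 4 - 10 * c 3 ^ 2 = 0 :=
  mul_eq_zero_iff_left hk.two_ne_zero

lemma kappaCoeff_two_eq_zero_iff (hk : CharOK k) {c : ℕ → k} :
    kappaCoeff c 2 = 0 ↔
      c 0 * c 8 - 2 * c 1 * c 7 - 8 * c 2 * c 6 + 34 * c 3 * c 5 - 25 * c 4 ^ 2 = 0 :=
  div_eq_zero_iff.trans (or_iff_left hk.three_ne_zero)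

lemma covk_binomCoeffs (hk : CharOK k) (c : ℕ → k) :
    covk (binomCoeffs 8 c) = binomForm 4 (kappaCoeff c) := by
  have octavic := hk.factorial_ne_zero (n := 8) (by norm_num)
  have three := hk.three_ne_zero
  refine (transvectant_binomForm (by norm_num) (by norm_num) octavic octavic c c).trans
    (congrArg (binForm 4) (funext fun i => ?_))
  fin_cases i <;>
  · simp [transvectantCoeff, binomCoeffs, kappaCoeff, Finset.sum_range_succ,
      Finset.Nat.antidiagonal_succ, Nat.choose]
    field_simp
    ring

lemma covh_binomCoeffs (hk : CharOK k) (c : ℕ → k) :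
    covh (binomCoeffs 8 c) = binomForm 4 (hessianCoeff (kappaCoeff c)) := by
  have quartic := hk.factorial_ne_zero (n := 4) (by norm_num)
  have three := hk.three_ne_zero
  rw [covh, covk_binomCoeffs hk]
  refine (transvectant_binomForm (by norm_num) (by norm_num) quartic quartic _ _).trans
    (congrArg (binForm 4) (funext fun i => ?_))
  generalize kappaCoeff c = x
  fin_cases i <;>
  · simp [transvectantCoeff, binomCoeffs, hessianCoeff, Finset.sum_range_succ,
      Finset.Nat.antidiagonal_succ, Nat.choose]
    field_simp
    ring

lemma covm_binomCoeffs (hk : CharOK k) (c : ℕ → k) :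
    covm (binomCoeffs 8 c) = binomForm 4 (contractionCoeff 4 c (kappaCoeff c)) := by
  rw [covm, covk_binomCoeffs hk]
  exact transvectant_binomForm_self_right (by norm_num) (hk.factorial_ne_zero (by norm_num)) _ _

lemma J2_binomCoeffs (hk : CharOK k) (c : ℕ → k) :
    J2 (binomCoeffs 8 c) = 2 ^ 3 * 5 * 7 * quadraticInvariant c := by
  have pairing : constantCoeff (transvectant 8 8 8 (octForm (binomCoeffs 8 c))
      (octForm (binomCoeffs 8 c))) = contractionCoeff 8 c c 0 :=
    constantCoeff_transvectant_binomForm (hk.factorial_ne_zero (by norm_num)) c c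
  rw [J2, pairing]
  simp [quadraticInvariant, contractionCoeff, Finset.sum_range_succ, Nat.choose]
  ring

set_option maxHeartbeats 400000 in
-- The double sum expands into 225 products.
lemma sum_mul_transvectantCoeff_eight_eight_four (c : ℕ → k) :
    ∑ j ∈ Finset.range 9, (-1) ^ j * (c (8 - j) * transvectantCoeff 8 8 4 c c j) =
      2 * 3 * cubicInvariant c := by
  simp [cubicInvariant, transvectantCoeff, Finset.sum_range_succ, Finset.Nat.antidiagonal_succ,
    Nat.choose]
  ring

lemma J3_binomCoeffs (hk : CharOK k) (c : ℕ → k) :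
    J3 (binomCoeffs 8 c) = 2 ^ 5 * 5 ^ 2 * 7 ^ 3 * cubicInvariant c := by
  have octavic := hk.factorial_ne_zero (n := 8) (by norm_num)
  have three := hk.three_ne_zero
  have covg_eq : covg (binomCoeffs 8 c) =
      binomForm 8 (fun i => transvectantCoeff 8 8 4 c c i / Nat.choose 8 i) :=
    (transvectant_binomForm (by norm_num) (by norm_num) octavic octavic c c).trans
      (congrArg (binForm 8) (binomCoeffs_div_choose octavic _).symm)
  have pairing : constantCoeff (transvectant 8 8 8 (octForm (binomCoeffs 8 c))
      (covg (binomCoeffs 8 c))) =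
      ∑ j ∈ Finset.range 9, (-1) ^ j * (c (8 - j) * transvectantCoeff 8 8 4 c c j) := by
    rw [covg_eq]
    refine (constantCoeff_transvectant_binomForm octavic c _).trans
      (Finset.sum_congr rfl fun j hj => ?_)
    have choose_ne_zero : (Nat.choose 8 j : k) ≠ 0 := cast_choose_ne_zero octavic (by grind)
    rw [zero_add]
    field_simp
  rw [J3, pairing, sum_mul_transvectantCoeff_eight_eight_four]
  field_simp

lemma J4_binomCoeffs (hk : CharOK k) (c : ℕ → k) :
    J4 (binomCoeffs 8 c) = 2 ^ 10 * 3 * 7 ^ 4 * quarticI (kappaCoeff c) := by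
  rw [J4, covk_binomCoeffs hk,
    constantCoeff_transvectant_binomForm (hk.factorial_ne_zero (by norm_num))]
  generalize kappaCoeff c = x
  simp [quarticI, contractionCoeff, Finset.sum_range_succ, Nat.choose]
  ring

lemma J5_binomCoeffs (hk : CharOK k) (c : ℕ → k) :
    J5 (binomCoeffs 8 c) = 2 ^ 9 * 5 * 7 ^ 5 *
      contractionCoeff 4 (contractionCoeff 4 c (kappaCoeff c)) (kappaCoeff c) 0 := by
  rw [J5, covm_binomCoeffs hk, covk_binomCoeffs hk,
    constantCoeff_transvectant_binomForm (hk.factorial_ne_zero (by norm_num))]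

lemma J6_binomCoeffs (hk : CharOK k) (c : ℕ → k) :
    J6 (binomCoeffs 8 c) = 2 ^ 15 * 3 ^ 3 * 7 ^ 6 * quarticJ (kappaCoeff c) := by
  have three := hk.three_ne_zero
  rw [J6, covk_binomCoeffs hk, covh_binomCoeffs hk,
    constantCoeff_transvectant_binomForm (hk.factorial_ne_zero (by norm_num))]
  generalize kappaCoeff c = x
  simp [quarticJ, contractionCoeff, hessianCoeff, Finset.sum_range_succ, Nat.choose]
  field_simp
  ring

lemma J7_binomCoeffs (hk : CharOK k) (c : ℕ → k) :
    J7 (binomCoeffs 8 c) = 2 ^ 14 * 3 * 5 * 7 ^ 7 *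
      contractionCoeff 4 (contractionCoeff 4 c (kappaCoeff c)) (hessianCoeff (kappaCoeff c)) 0 := by
  rw [J7, covm_binomCoeffs hk, covh_binomCoeffs hk,
    constantCoeff_transvectant_binomForm (hk.factorial_ne_zero (by norm_num))]

lemma jVanish_binomCoeffs_iff (hk : CharOK k) {c : ℕ → k} :
    JVanish (binomCoeffs 8 c) ↔
      quadraticInvariant c = 0 ∧ cubicInvariant c = 0 ∧ quarticI (kappaCoeff c) = 0 ∧
      contractionCoeff 4 (contractionCoeff 4 c (kappaCoeff c)) (kappaCoeff c) 0 = 0 ∧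
      quarticJ (kappaCoeff c) = 0 ∧
      contractionCoeff 4 (contractionCoeff 4 c (kappaCoeff c)) (hessianCoeff (kappaCoeff c)) 0
        = 0 := by
  simp only [JVanish, J2_binomCoeffs hk, J3_binomCoeffs hk, J4_binomCoeffs hk, J5_binomCoeffs hk,
    J6_binomCoeffs hk, J7_binomCoeffs hk, mul_eq_zero, pow_eq_zero_iff, hk.two_ne_zero,
    hk.three_ne_zero, hk.five_ne_zero, hk.seven_ne_zero, ne_eq, OfNat.ofNat_ne_zero,
    not_false_eq_true, or_self, false_or]

end ExplicitFormulas

section NormalForms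

variable {c : ℕ → k} {s : k} {i n : ℕ}

lemma mem_nullcone_of_shear (h : binomCoeffs n (shear s c) ∈ nullcone k n) :
    binomCoeffs n c ∈ nullcone k n :=
  mem_nullcone_of_actCoeffs_mem (g := !![1, 0; s, 1]) (by simp [Matrix.det_fin_two])
    (by rwa [actCoeffs_binomCoeffs_shear])

lemma mem_nullcone_of_quarterTurn (h : binomCoeffs n (quarterTurn n c) ∈ nullcone k n) :
    binomCoeffs n c ∈ nullcone k n :=
  mem_nullcone_of_actCoeffs_mem (g := !![0, 1; -1, 0]) (by simp [Matrix.det_fin_two])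
    (by rwa [actCoeffs_binomCoeffs_quarterTurn])

lemma mem_nullcone_of_forall_le_four [Infinite k] (hc : ∀ i ≤ 4, c i = 0) :
    binomCoeffs 8 c ∈ nullcone k 8 :=
  mem_nullcone_of_forall_two_mul_le fun i hi => by simp [binomCoeffs, hc i (by omega)]

lemma mem_nullcone_of_forall_four_le [Infinite k] (hc : ∀ i, 4 ≤ i → i ≤ 8 → c i = 0) :
    binomCoeffs 8 c ∈ nullcone k 8 :=
  mem_nullcone_of_quarterTurn <| mem_nullcone_of_forall_le_four fun i hi => by
    rw [quarterTurn, hc (8 - i) (by omega) (by omega), mul_zero]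

lemma JVanish.shear (hc : JVanish (binomCoeffs 8 c)) (s : k) :
    JVanish (binomCoeffs 8 (shear s c)) := by
  rw [← actCoeffs_binomCoeffs_shear]
  exact hc.map_actCoeffs (by simp [Matrix.det_fin_two])

lemma JVanish.quarterTurn (hc : JVanish (binomCoeffs 8 c)) :
    JVanish (binomCoeffs 8 (quarterTurn 8 c)) := by
  rw [← actCoeffs_binomCoeffs_quarterTurn]
  exact hc.map_actCoeffs (by simp [Matrix.det_fin_two])

lemma kappaCoeff_shear (hk : CharOK k) (hi : i ≤ 4) :
    kappaCoeff (shear s c) i = shear s (kappaCoeff c) i := by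
  refine eq_of_binomForm_eq (hk.factorial_ne_zero (by norm_num)) hi ?_
  rw [← covk_binomCoeffs hk, ← actCoeffs_binomCoeffs_shear,
    isCovariant_covk.map_actCoeffs _ (by simp [Matrix.det_fin_two]), covk_binomCoeffs hk,
    substHom_binomForm_shear]

lemma kappaCoeff_quarterTurn (hk : CharOK k) (hi : i ≤ 4) :
    kappaCoeff (quarterTurn 8 c) i = quarterTurn 4 (kappaCoeff c) i := by
  refine eq_of_binomForm_eq (hk.factorial_ne_zero (by norm_num)) hi ?_
  rw [← covk_binomCoeffs hk, ← actCoeffs_binomCoeffs_quarterTurn,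
    isCovariant_covk.map_actCoeffs _ (by simp [Matrix.det_fin_two]), covk_binomCoeffs hk,
    substHom_binomForm_quarterTurn]

lemma shear_of_forall_lt (h : ∀ j < i, c j = 0) : shear s c i = c i := by
  rw [shear, Finset.sum_range_succ, Finset.sum_eq_zero fun j hj => by
    rw [h j (Finset.mem_range.1 hj), mul_zero]]
  simp

lemma shear_succ_of_forall_lt (h : ∀ j < i, c j = 0) :
    shear s c (i + 1) = (i + 1) * s * c i + c (i + 1) := by
  rw [shear, Finset.sum_range_succ, Finset.sum_range_succ, Finset.sum_eq_zero fun j hj => by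
    rw [h j (Finset.mem_range.1 hj), mul_zero]]
  simp

lemma exists_shear_succ_eq_zero (hi : ((i + 1 : ℕ) : k) ≠ 0) (h : ∀ j < i, c j = 0)
    (hci : c i ≠ 0) : ∃ s, shear s c (i + 1) = 0 := by
  refine ⟨-c (i + 1) / ((i + 1) * c i), ?_⟩
  rw [Nat.cast_succ] at hi
  rw [shear_succ_of_forall_lt h]
  field_simp
  ring

lemma exists_shear_eq_zero [IsAlgClosed k] (hn : n ≠ 0) (hc : c 0 ≠ 0) :
    ∃ s, shear s c n = 0 := by
  let p : Polynomial k := ∑ j ∈ Finset.range (n + 1),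
    Polynomial.C (n.choose j * c j) * Polynomial.X ^ (n - j)
  have coeff_p : p.coeff n = c 0 := by
    simp only [p, Polynomial.finsetSum_coeff, Polynomial.coeff_C_mul_X_pow]
    rw [Finset.sum_eq_single_of_mem 0 (by simp) fun j hj hj0 => if_neg (by grind)]
    simp
  have degree_p : p.degree ≠ 0 := fun h => hc <| by
    rw [← coeff_p, Polynomial.coeff_eq_zero_of_degree_lt]
    rw [h]
    exact_mod_cast Nat.pos_of_ne_zero hn
  obtain ⟨s, hs⟩ := IsAlgClosed.exists_root p degree_p
  refine ⟨s, ?_⟩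
  rw [← hs.eq_zero, Polynomial.eval_finsetSum, shear]
  refine Finset.sum_congr rfl fun j _ => ?_
  rw [Polynomial.eval_C_mul, Polynomial.eval_pow, Polynomial.eval_X, mul_right_comm]

end NormalForms

section CaseAnalysis

variable {c : ℕ → k}

lemma contractionCoeff_four (c e : ℕ → k) (t : ℕ) :
    contractionCoeff 4 c e t = c (t + 4) * e 0 - 4 * c (t + 3) * e 1 + 6 * c (t + 2) * e 2
      - 4 * c (t + 1) * e 3 + c t * e 4 := by
  simp [contractionCoeff, Finset.sum_range_succ, Nat.choose]
  ring

lemma kappaCoeff_three_eq_zero_of_coeff_eq_zero (hk : CharOK k) (hc : JVanish (binomCoeffs 8 c))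
    (c1 : c 1 = 0) (c2 : c 2 = 0) (k0 : kappaCoeff c 0 = 0) (k1 : kappaCoeff c 1 = 0)
    (k2 : kappaCoeff c 2 = 0) : kappaCoeff c 3 = 0 := by
  obtain ⟨j2, j3, -⟩ := (jVanish_binomCoeffs_iff hk).1 hc
  rw [kappaCoeff_zero_eq_zero_iff hk] at k0
  rw [kappaCoeff_two_eq_zero_iff hk] at k2
  simp only [kappaCoeff, quadraticInvariant, cubicInvariant, c1, c2] at j2 j3 k0 k1 k2 ⊢
  have e35 : 3 * (c 3 * c 5) - 2 * c 4 ^ 2 = 0 := by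
    have : 2 * 3 * 5 * (3 * (c 3 * c 5) - 2 * c 4 ^ 2) = 0 := by linear_combination k2 - j2
    simpa [hk.two_ne_zero, hk.three_ne_zero, hk.five_ne_zero] using this
  have e08 : 3 * (c 0 * c 8) - 7 * c 4 ^ 2 = 0 := by linear_combination 3 * k2 - 34 * e35
  have e04 : c 0 * c 4 ^ 3 - 27 * c 3 ^ 4 = 0 := by
    have : 2 ^ 2 * 3 * 5 * (c 0 * c 4 ^ 3 - 27 * c 3 ^ 4) = 0 := by
      linear_combination -3 * c 0 * j3 + c 0 * c 4 * e08 - 12 * c 0 * c 5 * k1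
        + 9 * (c 0 * c 6 + 10 * c 3 ^ 2) * k0 + 72 * c 3 ^ 2 * k0 - 56 * c 0 * c 4 * e35
    simpa [hk.two_ne_zero, hk.three_ne_zero, hk.five_ne_zero] using this
  by_cases c3 : c 3 = 0
  · have c4 : c 4 = 0 := by simpa [c3, hk.two_ne_zero] using e35
    simp [c3, c4]
  · have c0 : c 0 ≠ 0 := by
      rintro c0
      have : 2 * 5 * c 3 ^ 2 = 0 := by linear_combination c 6 * c0 - k0
      exact c3 (by simpa [hk.two_ne_zero, hk.five_ne_zero] using this)
    have : 3 * (c 0 * (c 3 * (9 * c 3 * c 6 - 5 * c 4 * c 5))) = 0 := by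
      linear_combination 27 * c 3 ^ 2 * k0 - 5 * c 0 * c 4 * e35 - 10 * e04
    simpa [hk.three_ne_zero, c0, c3] using this

lemma kappaCoeff_three_eq_zero_of_kappaCoeff_four_eq_zero (hk : CharOK k)
    (hc : JVanish (binomCoeffs 8 c)) (h : ∀ i < 3, kappaCoeff c i = 0)
    (k4 : kappaCoeff c 4 = 0) : kappaCoeff c 3 = 0 := by
  have k0 := h 0 (by norm_num)
  have k1 := h 1 (by norm_num)
  have k2 := h 2 (by norm_num)
  obtain ⟨-, -, -, j5, -, j7⟩ := (jVanish_binomCoeffs_iff hk).1 hc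
  simp only [contractionCoeff_four, hessianCoeff, k0, k1, k2, k4] at j5 j7
  by_contra k3
  have c1 : c 1 = 0 := by
    have : 2 ^ 3 * (kappaCoeff c 3 ^ 3 * c 1) = 0 := by linear_combination j7
    simpa [hk.two_ne_zero, k3] using this
  have c2 : c 2 = 0 := by
    have : 2 ^ 4 * (kappaCoeff c 3 ^ 2 * c 2) = 0 := by linear_combination j5
    simpa [hk.two_ne_zero, k3] using this
  exact k3 (kappaCoeff_three_eq_zero_of_coeff_eq_zero hk hc c1 c2 k0 k1 k2)

lemma kappaCoeff_one_eq_zero (hk : CharOK k) (hc : JVanish (binomCoeffs 8 c))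
    (k0 : kappaCoeff c 0 = 0) : kappaCoeff c 1 = 0 := by
  by_contra k1
  obtain ⟨s, hs⟩ := exists_shear_succ_eq_zero (by simpa [one_add_one_eq_two] using hk.two_ne_zero)
    (c := kappaCoeff c) (i := 1) (by simpa using k0) k1
  have e0 : kappaCoeff (shear s c) 0 = 0 := by
    rw [kappaCoeff_shear hk (by norm_num), shear_of_forall_lt (by simp), k0]
  have e1 : kappaCoeff (shear s c) 1 ≠ 0 := by
    rwa [kappaCoeff_shear hk (by norm_num), shear_of_forall_lt (by simpa using k0)]
  have e2 : kappaCoeff (shear s c) 2 = 0 := by rw [kappaCoeff_shear hk (by norm_num), hs]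
  obtain ⟨-, -, j4, -, j6, -⟩ := (jVanish_binomCoeffs_iff hk).1 (hc.shear s)
  have e3 : kappaCoeff (shear s c) 3 = 0 := by
    have : 2 ^ 2 * (kappaCoeff (shear s c) 1 * kappaCoeff (shear s c) 3) = 0 := by
      simp only [quarticI, e0, e2] at j4
      linear_combination -j4
    simpa [hk.two_ne_zero, e1] using this
  have e4 : kappaCoeff (shear s c) 4 = 0 := by simpa [quarticJ, e0, e2, e3, e1] using j6
  have turned := kappaCoeff_three_eq_zero_of_kappaCoeff_four_eq_zero hk (hc.shear s).quarterTurn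
    (by
      intro i hi
      rw [kappaCoeff_quarterTurn hk (by omega)]
      interval_cases i <;> simp [quarterTurn, e2, e3, e4])
    (by simp [kappaCoeff_quarterTurn hk, quarterTurn, e0])
  rw [kappaCoeff_quarterTurn hk (by norm_num)] at turned
  exact e1 (by simpa [quarterTurn] using turned)

lemma kappaCoeff_three_eq_zero (hk : CharOK k) (hc : JVanish (binomCoeffs 8 c))
    (h : ∀ i < 3, kappaCoeff c i = 0) : kappaCoeff c 3 = 0 := by
  by_contra k3
  have four_ne_zero : ((3 + 1 : ℕ) : k) ≠ 0 := by
    rw [show 3 + 1 = 2 * 2 from rfl, Nat.cast_mul]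
    exact mul_self_ne_zero.2 hk.two_ne_zero
  obtain ⟨s, hs⟩ := exists_shear_succ_eq_zero four_ne_zero h k3
  refine k3 ?_
  rw [← shear_of_forall_lt h, ← kappaCoeff_shear hk (by norm_num)]
  refine kappaCoeff_three_eq_zero_of_kappaCoeff_four_eq_zero hk (hc.shear s) (fun i hi => ?_)
    (by rw [kappaCoeff_shear hk le_rfl, hs])
  rw [kappaCoeff_shear hk (by omega), shear_of_forall_lt fun j hj => h j (by omega), h i hi]

theorem kappaCoeff_eq_zero_of_lt_four (hk : CharOK k) (hc : JVanish (binomCoeffs 8 c))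
    (k0 : kappaCoeff c 0 = 0) : ∀ i < 4, kappaCoeff c i = 0 := by
  have k1 := kappaCoeff_one_eq_zero hk hc k0
  have k2 : kappaCoeff c 2 = 0 := by
    obtain ⟨-, -, j4, -⟩ := (jVanish_binomCoeffs_iff hk).1 hc
    simpa [quarticI, k0, k1, hk.three_ne_zero] using j4
  have k3 : kappaCoeff c 3 = 0 :=
    kappaCoeff_three_eq_zero hk hc fun i hi => by interval_cases i <;> assumption
  intro i hi
  interval_cases i <;> assumption

/-- The octavics to which those with vanishing invariants are brought by `SL₂`: the form is
divisible by `X` and its covariant `κ` is a multiple of `X⁴`. -/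
structure IsNormalised (c : ℕ → k) : Prop where
  jVanish : JVanish (binomCoeffs 8 c)
  coeff_zero : c 0 = 0
  kappaCoeff_eq_zero : ∀ i < 4, kappaCoeff c i = 0

namespace IsNormalised

lemma shear (hc : IsNormalised c) (hk : CharOK k) (s : k) : IsNormalised (shear s c) where
  jVanish := hc.jVanish.shear s
  coeff_zero := by rw [shear_of_forall_lt (by simp), hc.coeff_zero]
  kappaCoeff_eq_zero i hi := by
    rw [kappaCoeff_shear hk hi.le,
      shear_of_forall_lt fun j hj => hc.kappaCoeff_eq_zero j (hj.trans hi),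
      hc.kappaCoeff_eq_zero i hi]

lemma equations (hc : IsNormalised c) (hk : CharOK k) :
    6 * c 1 * c 5 - 15 * c 2 * c 4 + 10 * c 3 ^ 2 = 0 ∧
      5 * c 1 * c 6 - 9 * c 2 * c 5 + 5 * c 3 * c 4 = 0 ∧
      2 * c 1 * c 7 + 8 * c 2 * c 6 - 34 * c 3 * c 5 + 25 * c 4 ^ 2 = 0 ∧
      c 1 * c 8 - 5 * c 2 * c 7 + 9 * c 3 * c 6 - 5 * c 4 * c 5 = 0 := by
  have k0 := (kappaCoeff_zero_eq_zero_iff hk).1 (hc.kappaCoeff_eq_zero 0 (by norm_num))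
  have k1 := hc.kappaCoeff_eq_zero 1 (by norm_num)
  have k2 := (kappaCoeff_two_eq_zero_iff hk).1 (hc.kappaCoeff_eq_zero 2 (by norm_num))
  have k3 := hc.kappaCoeff_eq_zero 3 (by norm_num)
  simp only [kappaCoeff] at k1 k3
  refine ⟨?_, ?_, ?_, k3⟩
  · linear_combination c 6 * hc.coeff_zero - k0
  · linear_combination c 7 * hc.coeff_zero - k1
  · linear_combination c 8 * hc.coeff_zero - k2

lemma mem_nullcone_of_coeff_three_four_eq_zero [Infinite k] (hc : IsNormalised c) (hk : CharOK k)
    (c1 : c 1 ≠ 0) (c3 : c 3 = 0) (c4 : c 4 = 0) : binomCoeffs 8 c ∈ nullcone k 8 := by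
  obtain ⟨k0, k1, k2, k3⟩ := hc.equations hk
  simp only [c3, c4] at k0 k1 k2 k3
  have c5 : c 5 = 0 := by
    have : 2 * 3 * (c 1 * c 5) = 0 := by linear_combination k0
    simpa [hk.two_ne_zero, hk.three_ne_zero, c1] using this
  have c6 : c 6 = 0 := by simpa [c5, c1, hk.five_ne_zero] using k1
  have c7 : c 7 = 0 := by simpa [c5, c6, c1, hk.two_ne_zero] using k2
  have c8 : c 8 = 0 := by simpa [c7, c1] using k3
  refine mem_nullcone_of_forall_four_le fun i hi hi' => ?_
  interval_cases i <;> assumption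

lemma mem_nullcone_of_coeff_two_eq_zero [Infinite k] (hc : IsNormalised c) (hk : CharOK k)
    (c1 : c 1 ≠ 0) (c2 : c 2 = 0) : binomCoeffs 8 c ∈ nullcone k 8 := by
  obtain ⟨k0, -, k2, -⟩ := hc.equations hk
  obtain ⟨j2, -⟩ := (jVanish_binomCoeffs_iff hk).1 hc.jVanish
  simp only [quadraticInvariant, hc.coeff_zero, c2] at j2 k0 k2
  have relation : 64 * c 3 ^ 3 + 27 * c 1 * c 4 ^ 2 = 0 := by
    have : 5 * (64 * c 3 ^ 3 + 27 * c 1 * c 4 ^ 2) = 0 := by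
      linear_combination c 1 * j2 + 4 * c 1 * k2 + 32 * c 3 * k0
    simpa [hk.five_ne_zero] using this
  by_cases c3 : c 3 = 0
  · have c4 : c 4 = 0 := by
      have : 3 ^ 3 * (c 1 * c 4 ^ 2) = 0 := by linear_combination relation - 64 * c 3 ^ 2 * c3
      simpa [hk.three_ne_zero, c1] using this
    exact hc.mem_nullcone_of_coeff_three_four_eq_zero hk c1 c3 c4
  · have eight_ne_zero : (8 : k) ≠ 0 := by
      rw [show (8 : k) = 2 ^ 3 by norm_num]
      exact pow_ne_zero 3 hk.two_ne_zero
    obtain ⟨s, hs⟩ : ∃ s, 8 * c 3 * s + 3 * c 4 = 0 :=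
      ⟨-(3 * c 4) / (8 * c 3), by field_simp; ring⟩
    have double_root : 3 * s ^ 2 * c 1 + c 3 = 0 := by
      have : 2 ^ 6 * c 3 ^ 2 * (3 * s ^ 2 * c 1 + c 3) = 0 := by
        linear_combination relation + 3 * c 1 * (8 * c 3 * s - 3 * c 4) * hs
      simpa [hk.two_ne_zero, c3] using this
    refine mem_nullcone_of_shear
      ((hc.shear hk s).mem_nullcone_of_coeff_three_four_eq_zero hk ?_ ?_ ?_)
    · rwa [shear_of_forall_lt (by simpa using hc.coeff_zero)]
    · simp only [_root_.shear, Finset.sum_range_succ, hc.coeff_zero, c2]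
      simpa [Nat.choose] using double_root
    · have : 3 * (4 * s ^ 3 * c 1 + 4 * s * c 3 + c 4) = 0 := by
        linear_combination 4 * s * double_root + hs
      simp only [_root_.shear, Finset.sum_range_succ, hc.coeff_zero, c2]
      simpa [Nat.choose, hk.three_ne_zero] using this

lemma mem_nullcone_of_coeff_one_three_eq_zero [Infinite k] (hc : IsNormalised c) (hk : CharOK k)
    (c1 : c 1 = 0) (c2 : c 2 ≠ 0) (c3 : c 3 = 0) : binomCoeffs 8 c ∈ nullcone k 8 := by
  obtain ⟨k0, k1, k2, k3⟩ := hc.equations hk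
  obtain ⟨-, j3, -⟩ := (jVanish_binomCoeffs_iff hk).1 hc.jVanish
  simp only [c1, c3] at k0 k1 k2 k3
  have c4 : c 4 = 0 := by
    have : 3 * 5 * (c 2 * c 4) = 0 := by linear_combination -k0
    simpa [hk.three_ne_zero, hk.five_ne_zero, c2] using this
  have c5 : c 5 = 0 := by
    have : 3 ^ 2 * (c 2 * c 5) = 0 := by linear_combination -k1
    simpa [hk.three_ne_zero, c2] using this
  have c6 : c 6 = 0 := by
    have : 2 ^ 3 * (c 2 * c 6) = 0 := by linear_combination k2 - 25 * c 4 * c4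
    simpa [hk.two_ne_zero, c2] using this
  have c7 : c 7 = 0 := by simpa [c2, c4, hk.five_ne_zero] using k3
  have c8 : c 8 = 0 := by
    simpa [cubicInvariant, hc.coeff_zero, c1, c2, c3, c4, c5, c6, c7, hk.three_ne_zero] using j3
  refine mem_nullcone_of_forall_four_le fun i hi hi' => ?_
  interval_cases i <;> assumption

lemma mem_nullcone_of_coeff_one_two_eq_zero [Infinite k] (hc : IsNormalised c) (hk : CharOK k)
    (c1 : c 1 = 0) (c2 : c 2 = 0) : binomCoeffs 8 c ∈ nullcone k 8 := by
  obtain ⟨k0, -, k2, -⟩ := hc.equations hk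
  have c3 : c 3 = 0 := by
    have : 2 * 5 * c 3 ^ 2 = 0 := by linear_combination k0 - 6 * c 5 * c1 + 15 * c 4 * c2
    simpa [hk.two_ne_zero, hk.five_ne_zero] using this
  have c4 : c 4 = 0 := by
    have : 5 ^ 2 * c 4 ^ 2 = 0 := by
      linear_combination k2 - 2 * c 7 * c1 - 8 * c 6 * c2 + 34 * c 5 * c3
    simpa [hk.five_ne_zero] using this
  refine mem_nullcone_of_forall_le_four fun i hi => ?_
  interval_cases i
  exacts [hc.coeff_zero, c1, c2, c3, c4]

theorem mem_nullcone [Infinite k] (hc : IsNormalised c) (hk : CharOK k) :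
    binomCoeffs 8 c ∈ nullcone k 8 := by
  have c0 := hc.coeff_zero
  by_cases c1 : c 1 = 0
  · by_cases c2 : c 2 = 0
    · exact hc.mem_nullcone_of_coeff_one_two_eq_zero hk c1 c2
    · have vanish : ∀ j < 2, c j = 0 := fun j hj => by interval_cases j <;> assumption
      obtain ⟨s, hs⟩ := exists_shear_succ_eq_zero
        (by simpa [two_add_one_eq_three] using hk.three_ne_zero) vanish c2
      refine mem_nullcone_of_shear
        ((hc.shear hk s).mem_nullcone_of_coeff_one_three_eq_zero hk ?_ ?_ hs)
      · rwa [shear_of_forall_lt (by simpa using c0)]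
      · rwa [shear_of_forall_lt vanish]
  · obtain ⟨s, hs⟩ := exists_shear_succ_eq_zero
      (by simpa [one_add_one_eq_two] using hk.two_ne_zero) (by simpa using c0) c1
    refine mem_nullcone_of_shear ((hc.shear hk s).mem_nullcone_of_coeff_two_eq_zero hk ?_ hs)
    rwa [shear_of_forall_lt (by simpa using c0)]

end IsNormalised

-- As `κ = 0` is preserved by `SL₂`, any root of `f` may be moved to `X = 0`.
lemma mem_nullcone_of_kappaCoeff_eq_zero [IsAlgClosed k] (hk : CharOK k)
    (hc : JVanish (binomCoeffs 8 c)) (h : ∀ i ≤ 4, kappaCoeff c i = 0) :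
    binomCoeffs 8 c ∈ nullcone k 8 := by
  by_cases c0 : c 0 = 0
  · exact IsNormalised.mem_nullcone ⟨hc, c0, fun i hi => h i hi.le⟩ hk
  obtain ⟨s, hs⟩ := exists_shear_eq_zero (n := 8) (by norm_num) c0
  refine mem_nullcone_of_shear <| mem_nullcone_of_quarterTurn <|
    IsNormalised.mem_nullcone ⟨(hc.shear s).quarterTurn, ?_, fun i hi => ?_⟩ hk
  · rw [quarterTurn, Nat.sub_zero, hs, mul_zero]
  · rw [kappaCoeff_quarterTurn hk hi.le, quarterTurn, kappaCoeff_shear hk (Nat.sub_le 4 i),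
      shear_of_forall_lt fun j hj => h j (by omega), h _ (Nat.sub_le 4 i), mul_zero]

lemma mem_nullcone_of_kappaCoeff_zero_eq_zero [IsAlgClosed k] (hk : CharOK k)
    (hc : JVanish (binomCoeffs 8 c)) (k0 : kappaCoeff c 0 = 0) :
    binomCoeffs 8 c ∈ nullcone k 8 := by
  have kappa := kappaCoeff_eq_zero_of_lt_four hk hc k0
  obtain ⟨-, -, -, j5, -⟩ := (jVanish_binomCoeffs_iff hk).1 hc
  have c0_or_k4 : c 0 = 0 ∨ kappaCoeff c 4 = 0 := by
    simpa [contractionCoeff_four, kappa] using j5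
  rcases c0_or_k4 with c0 | k4
  · exact IsNormalised.mem_nullcone ⟨hc, c0, kappa⟩ hk
  · exact mem_nullcone_of_kappaCoeff_eq_zero hk hc fun i hi =>
      hi.lt_or_eq.elim (kappa i) fun h => h ▸ k4

theorem mem_nullcone_of_jVanish [IsAlgClosed k] (hk : CharOK k)
    {a : Fin 9 → k} (ha : JVanish a) : a ∈ nullcone k 8 := by
  obtain ⟨c, rfl⟩ := exists_binomCoeffs_eq (hk.factorial_ne_zero (n := 8) (by norm_num)) a
  by_cases k0 : kappaCoeff c 0 = 0
  · exact mem_nullcone_of_kappaCoeff_zero_eq_zero hk ha k0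
  obtain ⟨s, hs⟩ := exists_shear_eq_zero (n := 4) (by norm_num) k0
  refine mem_nullcone_of_shear <| mem_nullcone_of_quarterTurn <|
    mem_nullcone_of_kappaCoeff_zero_eq_zero hk (ha.shear s).quarterTurn ?_
  rw [kappaCoeff_quarterTurn hk (by norm_num), quarterTurn, kappaCoeff_shear hk (by norm_num), hs,
    mul_zero]

end CaseAnalysis

theorem nullcone_octavics_general (k : Type*) [Field k] [IsAlgClosed k] (hk : CharOK k) :
    nullcone k 8 =
      {a : Fin 9 → k |
        J2 a = 0 ∧ J3 a = 0 ∧ J4 a = 0 ∧ J5 a = 0 ∧ J6 a = 0 ∧ J7 a = 0} :=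
  Set.ext fun _ => ⟨jVanish_of_mem_nullcone, mem_nullcone_of_jVanish hk⟩

/-- The nullcone of the space of binary octavics is the common zero set of
`J_2, J_3, J_4, J_5, J_6, J_7`. -/
theorem nullcone_octavics (k : Type*) [Field k] [IsAlgClosed k] [CharZero k] :
    nullcone k 8 =
      {a : Fin 9 → k |
        J2 a = 0 ∧ J3 a = 0 ∧ J4 a = 0 ∧ J5 a = 0 ∧ J6 a = 0 ∧ J7 a = 0} :=
  nullcone_octavics_general k (by simp [CharOK])

end
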